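/- arXiv:2106.05600 — 3 statements merged into one kernel-verified Lean document; each statement's English description precedes it below -/
import Mathlib

section
/- Let q ≥ m and let Q_1,…,Q_m be pairwise distinct rational places of F. If (α_1,…,α_m) ∈ Ĥ(Q_1,…,Q_m), then α_1+⋯+α_m ≥ 0; conversely, if (α_1,…,α_m) ∈ Z^m satisfies α_1+⋯+α_m ≥ 2g, then (α_1,…,α_m) ∈ Ĥ(Q_1,…,Q_m). -/
/-!
If `0 ≠ f ∈ L(D)`, then `D` plus the divisor of `f` is effective, and principal divisors have degree
zero, so `0 ≤ deg D` (`divDeg_nonneg_of_mem_RR`). A function realizing `α` lies in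
`L(α₁Q₁ + ⋯ + α_mQ_m)`, which gives the first half.

For the second half put `D = α₁Q₁ + ⋯ + α_mQ_m` with `deg D ≥ 2g`. By Riemann-Roch
(`finrank_RR_of_large`) each `L(D - Q_i)` is a hyperplane in `L(D)`, and an `h ∈ L(D)` that avoids
all of them has `v_{Q_i}(h) = -α_i` for every `i`. Such an `h` exists because `m ≤ q` hyperplanes of
a vector space over `F_q` contain at most `q (q^(n-1) - 1) < q^n - 1` nonzero vectors in total
(`exists_mem_notMem_of_finrank`).
-/

open scoped BigOperators Classical

noncomputable section

namespace AGCodes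

/-- An algebraic function field `F` of one variable over the finite field `Fq`,
presented together with its set of places, discrete valuations, degrees of places,
genus, Riemann-Roch spaces, a canonical divisor, evaluation (residue) maps at
rational places, and the basic axioms these satisfy (including the Riemann-Roch
theorem). Divisors are finitely supported `ℤ`-valued functions on places. -/
structure Data (Fq F Place : Type*) [Field Fq] [Fintype Fq] [Field F] [Algebra Fq F] where
  /-- the (normalized, additive) discrete valuation at each place; by convention `v P 0 = 0` -/
  v : Place → F → ℤ
  /-- the degree of a place -/
  degP : Place → ℕ
  /-- the genus of the function field -/
  genus : ℕ
  /-- the Riemann-Roch space `L(D)` of a divisor `D` -/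
  RR : (Place →₀ ℤ) → Submodule Fq F
  /-- evaluation (residue) of a function at a place; meaningful at rational places
  for functions with no pole there -/
  ev : Place → F → Fq
  /-- a fixed canonical divisor -/
  Kdiv : Place →₀ ℤ
  degP_pos : ∀ P, 0 < degP P
  v_zero : ∀ P, v P 0 = 0
  v_mul : ∀ P (f g : F), f ≠ 0 → g ≠ 0 → v P (f * g) = v P f + v P g
  v_add : ∀ P (f g : F), f ≠ 0 → g ≠ 0 → f + g ≠ 0 → min (v P f) (v P g) ≤ v P (f + g)
  v_algebraMap : ∀ P (c : Fq), c ≠ 0 → v P (algebraMap Fq F c) = 0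
  v_exists_uniformizer : ∀ P : Place, ∃ f : F, f ≠ 0 ∧ v P f = 1
  v_support_finite : ∀ f : F, f ≠ 0 → {P : Place | v P f ≠ 0}.Finite
  /-- `Fq` is the full constant field: functions with no poles are constants -/
  const_of_no_poles : ∀ f : F, f ≠ 0 → (∀ P, 0 ≤ v P f) → ∃ c : Fq, f = algebraMap Fq F c
  /-- principal divisors have degree zero -/
  deg_principal : ∀ f : F, f ≠ 0 → ∑ᶠ P : Place, v P f * degP P = 0
  mem_RR : ∀ (D : Place →₀ ℤ) (f : F), f ∈ RR D ↔ f = 0 ∨ ∀ P, 0 ≤ v P f + D P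
  rr_findim : ∀ D : Place →₀ ℤ, FiniteDimensional Fq (RR D)
  /-- the Riemann-Roch theorem -/
  riemann_roch : ∀ D : Place →₀ ℤ,
    (Module.finrank Fq (RR D) : ℤ)
      = (D.sum fun P k => k * degP P) + 1 - genus
        + Module.finrank Fq (RR (Kdiv - D))
  ev_algebraMap : ∀ (P : Place) (c : Fq), ev P (algebraMap Fq F c) = c
  ev_add : ∀ (P : Place) (f g : F), degP P = 1 →
    (f = 0 ∨ 0 ≤ v P f) → (g = 0 ∨ 0 ≤ v P g) → ev P (f + g) = ev P f + ev P g
  ev_mul : ∀ (P : Place) (f g : F), degP P = 1 →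
    (f = 0 ∨ 0 ≤ v P f) → (g = 0 ∨ 0 ≤ v P g) → ev P (f * g) = ev P f * ev P g
  ev_eq_zero_iff : ∀ (P : Place) (f : F), degP P = 1 → f ≠ 0 → 0 ≤ v P f →
    (ev P f = 0 ↔ 1 ≤ v P f)

variable {Fq F Place : Type*} [Field Fq] [Fintype Fq] [Field F] [Algebra Fq F]

/-- The divisor `β₁Q₁ + ⋯ + β_tQ_t`. -/
def Gdiv {t : ℕ} (Q : Fin t → Place) (β : Fin t → ℤ) : Place →₀ ℤ :=
  ∑ i, Finsupp.single (Q i) (β i)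

/-- The divisor `P₁ + ⋯ + P_n` attached to a tuple of places. -/
def Ddiv {n : ℕ} (PP : Fin n → Place) : Place →₀ ℤ :=
  ∑ j, Finsupp.single (PP j) 1

namespace Data

variable (X : Data Fq F Place)

/-- The degree of a divisor. -/
def divDeg (D : Place →₀ ℤ) : ℤ := D.sum fun P k => k * X.degP P

/-- `ℓ(D)`, the dimension of the Riemann-Roch space of `D`. -/
def ell (D : Place →₀ ℤ) : ℕ := Module.finrank Fq (X.RR D)

/-- A place is rational if it has degree one. -/
def IsRational (P : Place) : Prop := X.degP P = 1

/-- A divisor is canonical iff it has degree `2g-2` and `ℓ = g`. -/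
def IsCanonical (W : Place →₀ ℤ) : Prop :=
  X.divDeg W = 2 * (X.genus : ℤ) - 2 ∧ X.ell W = X.genus

/-- The generalized Weierstrass semigroup `Ĥ(Q₁,…,Q_t)`: vectors
`(-v_{Q₁}(h),…,-v_{Q_t}(h))` for `h ≠ 0` regular outside `{Q₁,…,Q_t}`. -/
def Hhat {t : ℕ} (Q : Fin t → Place) : Set (Fin t → ℤ) :=
  {α | ∃ h : F, h ≠ 0 ∧ (∀ P : Place, (∀ i, P ≠ Q i) → 0 ≤ X.v P h) ∧
    ∀ i, α i = - X.v (Q i) h}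

/-- The classical Weierstrass semigroup `H(P) = {a ∈ ℕ : ∃ z, (z)_∞ = aP}`
(viewed inside `ℤ`). -/
def Hone (P : Place) : Set ℤ :=
  {a | 0 ≤ a ∧ ∃ h : F, h ≠ 0 ∧ (∀ R : Place, R ≠ P → 0 ≤ X.v R h) ∧ X.v P h = -a}

/-- `Ĥ_β = {a ∈ ℤ : ℓ(aP + G_β) ≠ ℓ((a-1)P + G_β)}`. -/
def HhatB (P : Place) {t : ℕ} (Q : Fin t → Place) (β : Fin t → ℤ) : Set ℤ :=
  {a | X.ell (Finsupp.single P a + Gdiv Q β) ≠ X.ell (Finsupp.single P (a-1) + Gdiv Q β)}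

/-- The algebraic geometry (evaluation) code `C_L(D, G)` attached to the tuple of
places `PP` (determining `D = P₁ + ⋯ + P_n`) and the divisor `G`. -/
def code {n : ℕ} (PP : Fin n → Place) (G : Place →₀ ℤ) : Set (Fin n → Fq) :=
  {w | ∃ z ∈ X.RR G, ∀ i, w i = X.ev (PP i) z}

/-- The dimension of the code `C_L(D, G)`. -/
def codeDim {n : ℕ} (PP : Fin n → Place) (G : Place →₀ ℤ) : ℕ :=
  Module.finrank Fq (Submodule.span Fq (X.code PP G))

/-- `Ĥ*_β = {a ∈ ℤ : C_L(D, aP+G_β) ≠ C_L(D, (a-1)P+G_β)}`. -/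
def HhatS {n : ℕ} (PP : Fin n → Place) (P : Place) {t : ℕ} (Q : Fin t → Place)
    (β : Fin t → ℤ) : Set ℤ :=
  {a | X.code PP (Finsupp.single P a + Gdiv Q β)
      ≠ X.code PP (Finsupp.single P (a-1) + Gdiv Q β)}

end Data

/-- The dual code with respect to the standard inner product. -/
def dualCode {n : ℕ} (C : Set (Fin n → Fq)) : Set (Fin n → Fq) :=
  {y | ∀ c ∈ C, ∑ i, y i * c i = 0}

/-- The isometric code `x · C = {(x₁c₁,…,x_nc_n) : c ∈ C}`. -/
def scaleCode {n : ℕ} (x : Fin n → Fq) (C : Set (Fin n → Fq)) : Set (Fin n → Fq) :=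
  (fun c => fun i => x i * c i) '' C

/-- A flag of codes `C₀, C₁, …, C_s` is `x`-isometry-dual if `x` has all coordinates
nonzero and `C_i = x · C_{s-i}^⊥` for all `i`. -/
def IsIsometryDualFlag {n s : ℕ} (C : Fin (s+1) → Set (Fin n → Fq))
    (x : Fin n → Fq) : Prop :=
  (∀ i, x i ≠ 0) ∧ ∀ i, C i = scaleCode x (dualCode (C (Fin.rev i)))

end AGCodes

open AGCodes

/-! ### Degrees and Riemann-Roch spaces -/

section RiemannRoch

variable {Fq F Place : Type*} [Field Fq] [Fintype Fq] [Field F] [Algebra Fq F]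
  (X : Data Fq F Place)

lemma divDeg_sub (D E : Place →₀ ℤ) : X.divDeg (D - E) = X.divDeg D - X.divDeg E := by
  unfold Data.divDeg
  exact Finsupp.sum_sub_index (fun P a b => by ring)

lemma divDeg_single (P : Place) (k : ℤ) : X.divDeg (Finsupp.single P k) = k * X.degP P := by
  simp [Data.divDeg]

lemma divDeg_Gdiv {m : ℕ} (Q : Fin m → Place) (hQ : ∀ i, X.IsRational (Q i)) (α : Fin m → ℤ) :
    X.divDeg (Gdiv Q α) = ∑ i, α i := by
  unfold Data.divDeg Gdiv
  rw [← Finsupp.sum_finsetSum_index (by simp) (by intros; ring)]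
  refine Finset.sum_congr rfl fun i _ => ?_
  have h : X.degP (Q i) = 1 := hQ i
  simp [h]

lemma Gdiv_apply {m : ℕ} (Q : Fin m → Place) (hQ : Function.Injective Q) (α : Fin m → ℤ)
    (i : Fin m) : Gdiv Q α (Q i) = α i := by
  simp [Gdiv, Finsupp.finsetSum_apply, Finsupp.single_apply, hQ.eq_iff]

lemma Gdiv_apply_of_ne {m : ℕ} (Q : Fin m → Place) (α : Fin m → ℤ) {P : Place}
    (hP : ∀ i, P ≠ Q i) : Gdiv Q α P = 0 := by
  simp [Gdiv, Finsupp.finsetSum_apply, fun i => (hP i).symm]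

/-- The divisor `(f) + D` is effective of degree `deg D`. -/
lemma divDeg_nonneg_of_mem_RR (D : Place →₀ ℤ) {f : F} (hf : f ≠ 0) (hfD : f ∈ X.RR D) :
    0 ≤ X.divDeg D := by
  have hv := ((X.mem_RR D f).1 hfD).resolve_left hf
  have hfin := X.v_support_finite f hf
  set S : Finset Place := hfin.toFinset ∪ D.support with hS
  have h0 : ∑ P ∈ S, X.v P f * (X.degP P : ℤ) = 0 := by
    rw [← X.deg_principal f hf]
    refine (finsum_eq_sum_of_support_subset _ fun P hP => ?_).symm
    have hne : X.v P f ≠ 0 := fun h => hP (by simp [h])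
    simp [hS, hne]
  have h1 : X.divDeg D = ∑ P ∈ S, D P * (X.degP P : ℤ) :=
    Finsupp.sum_of_support_subset _ Finset.subset_union_right _ (by simp)
  have h2 : X.divDeg D = ∑ P ∈ S, (X.v P f + D P) * (X.degP P : ℤ) := by
    simp only [add_mul, Finset.sum_add_distrib, h0, zero_add, h1]
  rw [h2]
  exact Finset.sum_nonneg fun P _ => mul_nonneg (hv P) (by positivity)

lemma finrank_RR_of_neg (D : Place →₀ ℤ) (hD : X.divDeg D < 0) :
    Module.finrank Fq (X.RR D) = 0 := by
  have : X.RR D = ⊥ := by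
    rw [Submodule.eq_bot_iff]
    intro f hf
    by_contra h
    exact absurd (divDeg_nonneg_of_mem_RR X D h hf) (not_le.2 hD)
  rw [this, finrank_bot]

/-- `L(0)` consists of the constants. -/
lemma finrank_RR_zero : Module.finrank Fq (X.RR 0) = 1 := by
  have : X.RR 0 = Submodule.span Fq {(1 : F)} := by
    ext f
    rw [X.mem_RR, Submodule.mem_span_singleton]
    constructor
    · rintro (rfl | h)
      · exact ⟨0, by simp⟩
      · by_cases hf : f = 0
        · exact ⟨0, by simp [hf]⟩
        · obtain ⟨c, rfl⟩ := X.const_of_no_poles f hf (by simpa using h)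
          exact ⟨c, by rw [Algebra.smul_def, mul_one]⟩
    · rintro ⟨c, rfl⟩
      rw [Algebra.smul_def, mul_one]
      by_cases hc : c = 0
      · left; simp [hc]
      · right; intro P; simp [X.v_algebraMap P c hc]
  rw [this, finrank_span_singleton one_ne_zero]

/-- Riemann-Roch for `D = 0` gives `ℓ(K) = g`; for `D = K` it then gives the degree of `K`. -/
lemma divDeg_Kdiv : X.divDeg X.Kdiv = 2 * (X.genus : ℤ) - 2 := by
  have h0 := X.riemann_roch 0
  have hK := X.riemann_roch X.Kdiv
  rw [sub_zero, finrank_RR_zero, Finsupp.sum_zero_index] at h0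
  rw [sub_self, finrank_RR_zero] at hK
  unfold Data.divDeg
  push_cast at h0 hK
  linarith

lemma finrank_RR_of_large (D : Place →₀ ℤ) (hD : 2 * (X.genus : ℤ) - 1 ≤ X.divDeg D) :
    (Module.finrank Fq (X.RR D) : ℤ) = X.divDeg D + 1 - X.genus := by
  have h := X.riemann_roch D
  rw [finrank_RR_of_neg X (X.Kdiv - D) (by rw [divDeg_sub, divDeg_Kdiv]; linarith)] at h
  simpa [Data.divDeg] using h

end RiemannRoch

/-! ### Avoiding hyperplanes over a finite field -/

/-- A vector space over a finite field with `q` elements is not covered by `m ≤ q` hyperplanes. -/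
lemma exists_mem_notMem_of_finrank {K V : Type*} [Field K] [Fintype K] [AddCommGroup V]
    [Module K V] {m : ℕ} (hm : m ≤ Fintype.card K) (W : Submodule K V)
    (U : Fin m → Submodule K V) [FiniteDimensional K W] [∀ i, FiniteDimensional K (U i)] (k : ℕ)
    (hW : Module.finrank K W = k + 1) (hU : ∀ i, Module.finrank K (U i) = k) :
    ∃ x ∈ W, ∀ i, x ∉ U i := by
  by_contra! hcon
  have hfin : ∀ (S : Submodule K V) [FiniteDimensional K S],
      (S : Set V).Finite ∧ ((S : Set V) \ {0}).ncard + 1 = Fintype.card K ^ Module.finrank K S := by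
    intro S _
    have : Finite S := Module.finite_of_finite K
    refine ⟨Set.toFinite _, ?_⟩
    rw [Set.ncard_sdiff_singleton_add_one S.zero_mem (Set.toFinite _), ← Nat.card_eq_fintype_card,
      ← Module.natCard_eq_pow_finrank (K := K) (V := S)]
    rfl
  have hsub : (W : Set V) \ {0} ⊆ ⋃ i, ((U i : Set V) \ {0}) := by
    rintro x ⟨hx, hx0⟩
    obtain ⟨i, hi⟩ := hcon x hx
    exact Set.mem_iUnion.2 ⟨i, hi, hx0⟩
  have hle : ((W : Set V) \ {0}).ncard ≤ ∑ i, ((U i : Set V) \ {0}).ncard :=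
    (Set.ncard_le_ncard hsub (Set.finite_iUnion fun i => (hfin (U i)).1.sdiff)).trans
      (Set.ncard_iUnion_le_of_fintype _)
  have hW' := (hfin W).2
  have hU' : ∀ i, ((U i : Set V) \ {0}).ncard = Fintype.card K ^ k - 1 := fun i => by
    have := (hfin (U i)).2
    rw [hU i] at this
    omega
  simp only [hU', Finset.sum_const, Finset.card_univ, Fintype.card_fin, smul_eq_mul] at hle
  rw [hW, pow_succ'] at hW'
  have hq : 1 < Fintype.card K := Fintype.one_lt_card
  have h1 := hle.trans (Nat.mul_le_mul_right _ hm)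
  rw [Nat.mul_sub, mul_one] at h1
  have h2 : Fintype.card K ≤ Fintype.card K * Fintype.card K ^ k :=
    Nat.le_mul_of_pos_right _ (by positivity)
  omega

theorem stmt0 {Fq F Place : Type*} [Field Fq] [Fintype Fq] [Field F] [Algebra Fq F]
    (X : Data Fq F Place) {m : ℕ} (hq : m ≤ Fintype.card Fq)
    (Q : Fin m → Place) (hQrat : ∀ i, X.IsRational (Q i))
    (hQinj : Function.Injective Q) (α : Fin m → ℤ) :
    (α ∈ X.Hhat Q → 0 ≤ ∑ i, α i) ∧
      (2 * (X.genus : ℤ) ≤ ∑ i, α i → α ∈ X.Hhat Q) := by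
  constructor
  · rintro ⟨h, h0, hreg, hα⟩
    rw [← divDeg_Gdiv X Q hQrat α]
    refine divDeg_nonneg_of_mem_RR X _ h0 ((X.mem_RR _ _).2 (Or.inr fun P => ?_))
    by_cases hP : ∃ i, P = Q i
    · obtain ⟨i, rfl⟩ := hP
      rw [Gdiv_apply Q hQinj, hα i]
      simp
    · push Not at hP
      rw [Gdiv_apply_of_ne Q α hP, add_zero]
      exact hreg P hP
  · intro hdeg
    set D := Gdiv Q α with hD
    have hDdeg : X.divDeg D = ∑ i, α i := divDeg_Gdiv X Q hQrat α
    have hEdeg : ∀ i, X.divDeg (D - Finsupp.single (Q i) 1) = ∑ i, α i - 1 := fun i => by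
      have h1 : X.degP (Q i) = 1 := hQrat i
      rw [divDeg_sub, divDeg_single, hDdeg, h1]
      simp
    -- Without places to prescribe, a nonzero constant will do.
    rcases Nat.eq_zero_or_pos m with rfl | hm
    · refine ⟨1, one_ne_zero, fun P _ => ?_, fun i => i.elim0⟩
      have := X.v_algebraMap P 1 one_ne_zero
      rw [map_one] at this
      exact this.ge
    have hW := finrank_RR_of_large X D (by rw [hDdeg]; linarith)
    have hU : ∀ i, _ := fun i =>
      finrank_RR_of_large X (D - Finsupp.single (Q i) 1) (by rw [hEdeg]; linarith)
    simp only [hEdeg] at hU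
    rw [hDdeg] at hW
    have := X.rr_findim
    obtain ⟨h, hhD, hhE⟩ := exists_mem_notMem_of_finrank hq (X.RR D)
      (fun i => X.RR (D - Finsupp.single (Q i) 1)) (∑ i, α i - X.genus).toNat
      (by omega) (fun i => by have := hU i; omega)
    have h0 : h ≠ 0 := fun h0 => hhE ⟨0, hm⟩ (h0 ▸ Submodule.zero_mem _)
    have hv := ((X.mem_RR D h).1 hhD).resolve_left h0
    refine ⟨h, h0, fun P hP => ?_, fun i => ?_⟩
    · have := hv P
      rwa [hD, Gdiv_apply_of_ne Q α hP, add_zero] at this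
    · have hi := hv (Q i)
      rw [hD, Gdiv_apply Q hQinj] at hi
      by_contra hne
      refine hhE i ((X.mem_RR _ _).2 (Or.inr fun P => ?_))
      by_cases hP : P = Q i
      · subst hP
        rw [Finsupp.sub_apply, Finsupp.single_eq_same, hD, Gdiv_apply Q hQinj]
        omega
      · rw [Finsupp.sub_apply, Finsupp.single_eq_of_ne hP, sub_zero]
        exact hv P
end
end

section
/- Let β = (β_1,…,β_t) ∈ Z^t. An integer a belongs to Ĥ*_β if and only if dim C_L(D, aP+G_β) − dim C_L(D, (a−1)P+G_β) = 1. Moreover, the set Ĥ*_β has exactly n elements. -/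
/-!
Write `ℓ` for the dimension of a Riemann-Roch space and let `E` be a divisor avoiding
`P₁, …, P_n`. Evaluation at these places is linear on `L(E)`, its image is the code `C_L(D, E)`
and its kernel is `L(E - D)`, so rank-nullity gives `dim C_L(D, E) = ℓ(E) - ℓ(E - D)`
(`codeDim_add_ell`).

By Riemann-Roch, `ℓ` grows by at most one when a rational place is added (`ell_le_succ`), hence
the codes `C_L(D, aP + G_β)` form an increasing chain of subspaces whose dimension grows by `0`
or `1` at each step. This is the first claim. The chain is zero for very negative `a`, since
divisors of negative degree have no sections, and has dimension `n` for large `a`, by Riemann-Roch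
again. The number of jumps is therefore `n` (`ncard_jumps`).
-/

open scoped BigOperators Classical

noncomputable section

open AGCodes

namespace AGCodes

namespace Data

variable {Fq F Place : Type*} [Field Fq] [Fintype Fq] [Field F] [Algebra Fq F]
variable (X : Data Fq F Place)

lemma divDeg_add (D E : Place →₀ ℤ) : X.divDeg (D + E) = X.divDeg D + X.divDeg E := by
  unfold divDeg
  exact Finsupp.sum_add_index' (by simp) (by intros; ring)

lemma divDeg_sub (D E : Place →₀ ℤ) : X.divDeg (D - E) = X.divDeg D - X.divDeg E := by
  have h := X.divDeg_add (D - E) E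
  rw [sub_add_cancel] at h
  linarith

lemma divDeg_single (P : Place) (a : ℤ) :
    X.divDeg (Finsupp.single P a) = a * X.degP P := by
  unfold divDeg
  exact Finsupp.sum_single_index (by simp)

lemma divDeg_Ddiv {n : ℕ} (PP : Fin n → Place) (h : ∀ j, X.IsRational (PP j)) :
    X.divDeg (Ddiv PP) = n := by
  let φ : (Place →₀ ℤ) →+ ℤ := AddMonoidHom.mk' X.divDeg X.divDeg_add
  have h1 : X.divDeg (Ddiv PP) = φ (∑ j, Finsupp.single (PP j) 1) := rfl
  rw [h1, map_sum]
  have h2 : ∀ j, φ (Finsupp.single (PP j) 1) = 1 := by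
    intro j
    change X.divDeg _ = 1
    rw [divDeg_single, show X.degP (PP j) = 1 from h j]
    simp
  simp [h2]

/-- A nonzero section `f` of `E` makes `(f) + E` effective, of degree `deg E`. -/
lemma RR_eq_bot_of_neg (E : Place →₀ ℤ) (hE : X.divDeg E < 0) : X.RR E = ⊥ := by
  rw [Submodule.eq_bot_iff]
  intro f hf
  by_contra h0
  have hv := ((X.mem_RR E f).1 hf).resolve_left h0
  have hfin := X.v_support_finite f h0
  set S : Finset Place := hfin.toFinset ∪ E.support with hS
  have h1 : ∑ R ∈ S, X.v R f * X.degP R = 0 := by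
    rw [← X.deg_principal f h0]
    symm
    apply finsum_eq_sum_of_support_subset
    intro R hR
    have : X.v R f ≠ 0 := by
      intro h
      simp [h] at hR
    simp [hS, this]
  have h2 : X.divDeg E = ∑ R ∈ S, E R * X.degP R := by
    unfold divDeg
    exact Finsupp.sum_of_support_subset _ Finset.subset_union_right _ (by simp)
  have h3 : 0 ≤ ∑ R ∈ S, (X.v R f + E R) * X.degP R :=
    Finset.sum_nonneg fun R _ => mul_nonneg (hv R) (by positivity)
  simp only [add_mul, Finset.sum_add_distrib] at h3
  linarith

lemma ell_eq_zero_of_neg (E : Place →₀ ℤ) (hE : X.divDeg E < 0) : X.ell E = 0 := by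
  unfold ell
  rw [X.RR_eq_bot_of_neg E hE]
  exact finrank_bot Fq F

lemma RR_mono {E E' : Place →₀ ℤ} (h : E ≤ E') : X.RR E ≤ X.RR E' := by
  intro f hf
  rw [mem_RR] at hf ⊢
  refine hf.imp id fun h' R => ?_
  have := h R
  have := h' R
  omega

lemma ell_mono {E E' : Place →₀ ℤ} (h : E ≤ E') : X.ell E ≤ X.ell E' := by
  have := X.rr_findim E'
  exact Submodule.finrank_mono (X.RR_mono h)

lemma riemann_roch_ell (E : Place →₀ ℤ) :
    (X.ell E : ℤ) = X.divDeg E + 1 - X.genus + X.ell (X.Kdiv - E) :=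
  X.riemann_roch E

lemma ell_le_succ {E E' : Place →₀ ℤ} (h : E ≤ E') (hd : X.divDeg E' = X.divDeg E + 1) :
    X.ell E' ≤ X.ell E + 1 := by
  have h1 := X.riemann_roch_ell E
  have h2 := X.riemann_roch_ell E'
  have h3 : X.ell (X.Kdiv - E') ≤ X.ell (X.Kdiv - E) := X.ell_mono (by gcongr)
  omega

variable {n : ℕ} (PP : Fin n → Place)

lemma regular_of_mem {E : Place →₀ ℤ} {R : Place} (hE : E R = 0) {z : F} (hz : z ∈ X.RR E) :
    z = 0 ∨ 0 ≤ X.v R z := by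
  refine ((X.mem_RR E z).1 hz).imp id fun h => ?_
  have := h R
  omega

/-- Evaluation at `P₁, …, P_n` as a linear map on `L(E)`, for a divisor `E` whose support avoids
these rational places. -/
def evMap (hr : ∀ j, X.IsRational (PP j)) (E : Place →₀ ℤ) (hE : ∀ j, E (PP j) = 0) :
    X.RR E →ₗ[Fq] (Fin n → Fq) where
  toFun z j := X.ev (PP j) z
  map_add' z w := by
    funext j
    exact X.ev_add (PP j) z w (hr j) (X.regular_of_mem (hE j) z.2) (X.regular_of_mem (hE j) w.2)
  map_smul' c z := by
    funext j
    have hc : algebraMap Fq F c = 0 ∨ 0 ≤ X.v (PP j) (algebraMap Fq F c) := by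
      by_cases h : c = 0
      · left; simp [h]
      · right; rw [X.v_algebraMap _ _ h]
    have := X.ev_mul (PP j) (algebraMap Fq F c) z (hr j) hc (X.regular_of_mem (hE j) z.2)
    simpa [Algebra.smul_def, X.ev_algebraMap] using this

lemma code_eq_range (hr : ∀ j, X.IsRational (PP j)) (E : Place →₀ ℤ)
    (hE : ∀ j, E (PP j) = 0) :
    X.code PP E = ((X.evMap PP hr E hE).range : Set (Fin n → Fq)) := by
  ext w
  constructor
  · rintro ⟨z, hz, h⟩
    exact ⟨⟨z, hz⟩, funext fun i => (h i).symm⟩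
  · rintro ⟨z, rfl⟩
    exact ⟨z, z.2, fun i => rfl⟩

lemma codeDim_eq (hr : ∀ j, X.IsRational (PP j)) (E : Place →₀ ℤ)
    (hE : ∀ j, E (PP j) = 0) :
    X.codeDim PP E = Module.finrank Fq (X.evMap PP hr E hE).range := by
  unfold codeDim
  rw [X.code_eq_range PP hr E hE, Submodule.span_eq]

lemma Ddiv_apply_self (hinj : Function.Injective PP) (j : Fin n) : Ddiv PP (PP j) = 1 := by
  simp [Ddiv, Finsupp.finsetSum_apply, Finsupp.single_apply, hinj.eq_iff]

lemma Ddiv_apply_of_ne {R : Place} (h : ∀ j, PP j ≠ R) : Ddiv PP R = 0 := by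
  simp [Ddiv, Finsupp.finsetSum_apply, h]

/-- The kernel of evaluation on `L(E)` is `L(E - D)`. -/
lemma map_ker_evMap (hr : ∀ j, X.IsRational (PP j)) (hinj : Function.Injective PP)
    (E : Place →₀ ℤ) (hE : ∀ j, E (PP j) = 0) :
    (X.evMap PP hr E hE).ker.map (X.RR E).subtype = X.RR (E - Ddiv PP) := by
  ext z
  constructor
  · rintro ⟨⟨z, hz⟩, hk, rfl⟩
    rw [mem_RR]
    by_cases h0 : z = 0
    · exact Or.inl h0
    refine Or.inr fun R => ?_
    have hv := ((X.mem_RR E z).1 hz).resolve_left h0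
    by_cases hR : ∃ j, PP j = R
    · obtain ⟨j, rfl⟩ := hR
      have hev : X.ev (PP j) z = 0 := congrFun (LinearMap.mem_ker.1 hk) j
      have hreg := (X.regular_of_mem (hE j) hz).resolve_left h0
      have := (X.ev_eq_zero_iff (PP j) z (hr j) h0 hreg).1 hev
      simp only [Finsupp.sub_apply, hE, Ddiv_apply_self PP hinj, Submodule.subtype_apply]
      omega
    · push Not at hR
      simpa [Ddiv_apply_of_ne PP hR] using hv R
  · intro hz
    have hle : E - Ddiv PP ≤ E := by
      have : 0 ≤ Ddiv PP := Finset.sum_nonneg fun j _ => by simp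
      exact sub_le_self _ this
    refine ⟨⟨z, X.RR_mono hle hz⟩, ?_, rfl⟩
    rw [SetLike.mem_coe, LinearMap.mem_ker]
    funext j
    change X.ev (PP j) z = 0
    by_cases h0 : z = 0
    · have := X.ev_algebraMap (PP j) 0
      rwa [map_zero, ← h0] at this
    · have hv := ((X.mem_RR _ z).1 hz).resolve_left h0 (PP j)
      simp only [Finsupp.sub_apply, hE, Ddiv_apply_self PP hinj] at hv
      exact (X.ev_eq_zero_iff (PP j) z (hr j) h0 (by omega)).2 (by omega)

lemma codeDim_add_ell (hr : ∀ j, X.IsRational (PP j)) (hinj : Function.Injective PP)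
    (E : Place →₀ ℤ) (hE : ∀ j, E (PP j) = 0) :
    X.codeDim PP E + X.ell (E - Ddiv PP) = X.ell E := by
  have := X.rr_findim E
  have h := (X.evMap PP hr E hE).finrank_range_add_finrank_ker
  rw [X.codeDim_eq PP hr E hE]
  unfold ell
  rw [← X.map_ker_evMap PP hr hinj E hE, Submodule.finrank_map_subtype_eq]
  exact h

/-- For `deg E` large, the correction terms `ℓ(K - E)` and `ℓ(K - E + D)` in Riemann-Roch vanish
and the code is everything. -/
lemma codeDim_eq_of_large (hr : ∀ j, X.IsRational (PP j)) (hinj : Function.Injective PP)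
    (E : Place →₀ ℤ) (hE : ∀ j, E (PP j) = 0) (hd : X.divDeg X.Kdiv + n < X.divDeg E) :
    X.codeDim PP E = n := by
  have h := X.codeDim_add_ell PP hr hinj E hE
  have hD := X.divDeg_Ddiv PP hr
  have hED := X.divDeg_sub E (Ddiv PP)
  have h1 := X.riemann_roch_ell E
  have h2 := X.riemann_roch_ell (E - Ddiv PP)
  rw [X.ell_eq_zero_of_neg (X.Kdiv - E) (by rw [divDeg_sub]; omega)] at h1
  rw [X.ell_eq_zero_of_neg (X.Kdiv - (E - Ddiv PP)) (by rw [divDeg_sub]; omega)] at h2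
  omega

end Data

/-- A sequence indexed by `ℤ` that is `0` up to `A`, equal to `n` from `B` on, and has steps `0`
or `1`, jumps exactly `n` times. -/
lemma ncard_jumps (d : ℤ → ℕ) (A B : ℤ) (n : ℕ) (hmono : ∀ a, d (a - 1) ≤ d a)
    (hstep : ∀ a, d a ≤ d (a - 1) + 1) (hA : ∀ a ≤ A, d a = 0) (hB : ∀ a, B ≤ a → d a = n) :
    {a | d a ≠ d (a - 1)}.ncard = n := by
  have key : ∀ k : ℕ, ((Finset.Ioc A (A + k)).filter fun a => d a ≠ d (a - 1)).card
      = d (A + k) := by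
    intro k
    induction k with
    | zero => simp [hA A le_rfl]
    | succ k ih =>
      have hI : Finset.Ioc A (A + (k + 1 : ℕ)) = insert (A + (k + 1 : ℕ)) (Finset.Ioc A (A + k)) := by
        ext x
        simp only [Finset.mem_Ioc, Finset.mem_insert]
        push_cast
        omega
      have hs : A + ((k + 1 : ℕ) : ℤ) - 1 = A + k := by push_cast; ring
      have h1 := hmono (A + (k + 1 : ℕ))
      have h2 := hstep (A + (k + 1 : ℕ))
      rw [hI, Finset.filter_insert]
      rw [hs] at h1 h2 ⊢
      split_ifs with h
      · rw [Finset.card_insert_of_notMem (by simp), ih]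
        omega
      · rw [ih]
        omega
  have hS : {a | d a ≠ d (a - 1)}
      = ((Finset.Ioc A (A + (B - A).toNat)).filter fun a => d a ≠ d (a - 1) : Finset ℤ) := by
    ext a
    simp only [Set.mem_ofPred_eq, Finset.coe_filter, Finset.mem_Ioc]
    refine ⟨fun h => ⟨⟨?_, ?_⟩, h⟩, fun h => h.2⟩
    · by_contra hc
      exact h (by rw [hA a (by omega), hA (a - 1) (by omega)])
    · by_contra hc
      exact h (by rw [hB a (by omega), hB (a - 1) (by omega)])
  rw [hS, Set.ncard_coe_finset, key, hB _ (by omega)]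

end AGCodes

theorem stmt5 {Fq F Place : Type*} [Field Fq] [Fintype Fq] [Field F] [Algebra Fq F]
    (X : Data Fq F Place) (P : Place) {t : ℕ} (Q : Fin t → Place) (β : Fin t → ℤ)
    (hPrat : X.IsRational P) (hQrat : ∀ i, X.IsRational (Q i))
    (hQinj : Function.Injective Q) (hPQ : ∀ i, Q i ≠ P)
    {n : ℕ} (PP : Fin n → Place) (hPPrat : ∀ j, X.IsRational (PP j))
    (hPPinj : Function.Injective PP)
    (hPPP : ∀ j, PP j ≠ P) (hPPQ : ∀ j i, PP j ≠ Q i) :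
    (∀ a : ℤ, a ∈ X.HhatS PP P Q β ↔
        X.codeDim PP (Finsupp.single P a + Gdiv Q β)
          = X.codeDim PP (Finsupp.single P (a - 1) + Gdiv Q β) + 1) ∧
      (X.HhatS PP P Q β).ncard = n := by
  have hE : ∀ (a : ℤ) (j : Fin n), (Finsupp.single P a + Gdiv Q β) (PP j) = 0 := by
    intro a j
    simp [Gdiv, (hPPP j).symm, fun i => (hPPQ j i).symm]
  have hle : ∀ a : ℤ, Finsupp.single P (a - 1) + Gdiv Q β ≤ Finsupp.single P a + Gdiv Q β := by
    intro a
    gcongr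
    omega
  have hdeg : ∀ a : ℤ, X.divDeg (Finsupp.single P a + Gdiv Q β) = a + X.divDeg (Gdiv Q β) := by
    intro a
    rw [X.divDeg_add, X.divDeg_single, show X.degP P = 1 from hPrat]
    simp
  have hrn : ∀ a : ℤ, _ := fun a =>
    X.codeDim_add_ell PP hPPrat hPPinj (Finsupp.single P a + Gdiv Q β) (hE a)
  have hsub : ∀ a : ℤ,
      (X.evMap PP hPPrat _ (hE (a - 1))).range ≤ (X.evMap PP hPPrat _ (hE a)).range := by
    rintro a _ ⟨z, rfl⟩
    exact ⟨⟨z, X.RR_mono (hle a) z.2⟩, rfl⟩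
  have hmono : ∀ a : ℤ, X.codeDim PP (Finsupp.single P (a - 1) + Gdiv Q β)
      ≤ X.codeDim PP (Finsupp.single P a + Gdiv Q β) := by
    intro a
    rw [X.codeDim_eq PP hPPrat _ (hE a), X.codeDim_eq PP hPPrat _ (hE (a - 1))]
    exact Submodule.finrank_mono (hsub a)
  have hstep : ∀ a : ℤ, X.codeDim PP (Finsupp.single P a + Gdiv Q β)
      ≤ X.codeDim PP (Finsupp.single P (a - 1) + Gdiv Q β) + 1 := by
    intro a
    have h1 := hrn a
    have h2 := hrn (a - 1)
    have h3 := X.ell_le_succ (hle a) (by rw [hdeg, hdeg]; ring)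
    have h4 := X.ell_mono (sub_le_sub_right (hle a) (Ddiv PP))
    omega
  have hmem : ∀ a : ℤ, a ∈ X.HhatS PP P Q β ↔ X.codeDim PP (Finsupp.single P a + Gdiv Q β)
      ≠ X.codeDim PP (Finsupp.single P (a - 1) + Gdiv Q β) := by
    intro a
    unfold Data.HhatS
    rw [Set.mem_ofPred_eq, not_iff_not]
    refine ⟨fun h => by unfold Data.codeDim; rw [h], fun h => ?_⟩
    rw [X.codeDim_eq PP hPPrat _ (hE a), X.codeDim_eq PP hPPrat _ (hE (a - 1))] at h
    rw [X.code_eq_range PP hPPrat _ (hE a), X.code_eq_range PP hPPrat _ (hE (a - 1)),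
      Submodule.eq_of_le_of_finrank_eq (hsub a) h.symm]
  refine ⟨fun a => ?_, ?_⟩
  · rw [hmem]
    have h1 := hmono a
    have h2 := hstep a
    omega
  · have hset : X.HhatS PP P Q β = {a | X.codeDim PP (Finsupp.single P a + Gdiv Q β)
        ≠ X.codeDim PP (Finsupp.single P (a - 1) + Gdiv Q β)} := Set.ext hmem
    rw [hset]
    refine ncard_jumps (fun a => X.codeDim PP (Finsupp.single P a + Gdiv Q β))
      (-X.divDeg (Gdiv Q β) - 1) (X.divDeg X.Kdiv + n + 1 - X.divDeg (Gdiv Q β)) n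
      hmono hstep (fun a ha => ?_) (fun a ha => ?_)
    · have h1 := hrn a
      have h2 := X.ell_eq_zero_of_neg (Finsupp.single P a + Gdiv Q β) (by rw [hdeg]; omega)
      change X.codeDim PP _ = 0
      omega
    · exact X.codeDim_eq_of_large PP hPPrat hPPinj _ (hE a) (by rw [hdeg]; omega)
end
end

section
/- Let β = (β_1,…,β_t) ∈ Z^t and let a ∈ Z satisfy 0 ≤ a + β_1+⋯+β_t < n. Then a ∈ Ĥ*_β if and only if a ∈ Ĥ_β. -/
/-!
Both conditions compare the same nested pair of Riemann-Roch spaces `L((a-1)P+G_β) ⊆ L(aP+G_β)`.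
A nonzero `z ∈ L(aP+G_β)` vanishing at all of `P₁,…,P_n` would satisfy
`(z) ≥ P₁+⋯+P_n-aP-G_β`, whose right-hand side has degree `n-a-∑β_i > 0`; this is impossible since
principal divisors have degree zero (`deg_le_zero_of_le_v`). Hence evaluation is injective on
`L(aP+G_β)` (`eq_of_ev_eq`), the two codes agree iff the two spaces agree, and, one space being
contained in the other, this happens iff their dimensions agree.
-/

open scoped BigOperators Classical

noncomputable section

open AGCodes

/-- A divisor lying below a principal divisor has nonpositive degree. -/
theorem deg_le_zero_of_le_v {Fq F Place : Type*} [Field Fq] [Fintype Fq] [Field F] [Algebra Fq F]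
    (X : Data Fq F Place) (f : F) (hf : f ≠ 0) (E : Place →₀ ℤ) (h : ∀ R, E R ≤ X.v R f) :
    X.divDeg E ≤ 0 := by
  set S : Finset Place := (X.v_support_finite f hf).toFinset ∪ E.support with hS
  have h1 : ∑ᶠ R : Place, X.v R f * X.degP R = ∑ R ∈ S, X.v R f * X.degP R := by
    apply finsum_eq_sum_of_support_subset
    intro R hR
    have : X.v R f ≠ 0 := left_ne_zero_of_mul hR
    simp [hS, this]
  have h2 : X.divDeg E = ∑ R ∈ S, E R * X.degP R :=
    Finsupp.sum_of_support_subset E Finset.subset_union_right _ (by simp)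
  rw [h2, ← X.deg_principal f hf, h1]
  exact Finset.sum_le_sum fun R _ => mul_le_mul_of_nonneg_right (h R) (Int.natCast_nonneg _)

theorem divDeg_add {Fq F Place : Type*} [Field Fq] [Fintype Fq] [Field F] [Algebra Fq F]
    (X : Data Fq F Place) (D E : Place →₀ ℤ) :
    X.divDeg (D + E) = X.divDeg D + X.divDeg E :=
  Finsupp.sum_add_index' (by simp) (by intros; ring)

theorem divDeg_Gdiv_s7 {Fq F Place : Type*} [Field Fq] [Fintype Fq] [Field F] [Algebra Fq F]
    (X : Data Fq F Place) {t : ℕ} (Q : Fin t → Place) (β : Fin t → ℤ)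
    (hQ : ∀ i, X.IsRational (Q i)) : X.divDeg (Gdiv Q β) = ∑ i, β i := by
  unfold Data.divDeg Gdiv
  rw [← Finsupp.sum_finsetSum_index (by simp) (by intros; ring)]
  refine Finset.sum_congr rfl fun i _ => ?_
  have := hQ i
  unfold Data.IsRational at this
  simp [this]

theorem Gdiv_apply_of_ne_s7 {Place : Type*} {t : ℕ} (Q : Fin t → Place) (β : Fin t → ℤ) (R : Place)
    (hR : ∀ i, R ≠ Q i) : Gdiv Q β R = 0 := by
  unfold Gdiv
  rw [Finsupp.finsetSum_apply]
  exact Finset.sum_eq_zero fun i _ => Finsupp.single_eq_of_ne (hR i)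

/-- The divisor `P₁ + ⋯ + P_n`, written as `Gdiv` with all coefficients one, takes the value one at
each `P_j`. -/
theorem Gdiv_one_apply {Place : Type*} {n : ℕ} (PP : Fin n → Place)
    (hinj : Function.Injective PP) (j : Fin n) : Gdiv PP (fun _ => 1) (PP j) = 1 := by
  unfold Gdiv
  rw [Finsupp.finsetSum_apply, Finset.sum_eq_single j]
  · simp
  · intro i _ hij
    exact Finsupp.single_eq_of_ne fun h => hij (hinj h).symm
  · simp

/-- Evaluation at `n` rational places outside the support of `G` is injective on `L(G)` as soon as
`deg G < n`. -/
theorem eq_of_ev_eq {Fq F Place : Type*} [Field Fq] [Fintype Fq] [Field F] [Algebra Fq F]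
    (X : Data Fq F Place) (G : Place →₀ ℤ) {n : ℕ} (PP : Fin n → Place)
    (hrat : ∀ j, X.IsRational (PP j)) (hinj : Function.Injective PP)
    (hG : ∀ j, G (PP j) = 0) (hdeg : X.divDeg G < n) (z w : F)
    (hz : z ∈ X.RR G) (hw : w ∈ X.RR G) (h : ∀ j, X.ev (PP j) z = X.ev (PP j) w) : z = w := by
  have reg : ∀ y ∈ X.RR G, ∀ j, y = 0 ∨ 0 ≤ X.v (PP j) y := by
    intro y hy j
    rcases (X.mem_RR G y).1 hy with h0 | h0
    · exact Or.inl h0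
    · have := h0 (PP j)
      rw [hG j, add_zero] at this
      exact Or.inr this
  have hd : z - w ∈ X.RR G := Submodule.sub_mem _ hz hw
  by_contra hne
  have hne' : z - w ≠ 0 := sub_ne_zero.2 hne
  have hv : ∀ j, 1 ≤ X.v (PP j) (z - w) := by
    intro j
    have hpos := (reg _ hd j).resolve_left hne'
    refine (X.ev_eq_zero_iff (PP j) _ (hrat j) hne' hpos).1 ?_
    have e := X.ev_add (PP j) (z - w) w (hrat j) (Or.inr hpos) (reg w hw j)
    rw [sub_add_cancel, h j] at e
    exact left_eq_add.1 (by rw [add_comm]; exact e)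
  have hdG := ((X.mem_RR G _).1 hd).resolve_left hne'
  have key := deg_le_zero_of_le_v X (z - w) hne' (Gdiv PP (fun _ => 1) + -G) (by
    intro R
    rw [Finsupp.add_apply, Finsupp.neg_apply]
    by_cases hR : ∃ j, R = PP j
    · obtain ⟨j, rfl⟩ := hR
      rw [Gdiv_one_apply PP hinj, hG j]
      simpa using hv j
    · rw [Gdiv_apply_of_ne_s7 PP _ R fun j hj => hR ⟨j, hj⟩]
      linarith [hdG R])
  have hneg := divDeg_add X G (-G)
  rw [add_neg_cancel] at hneg
  have h00 : X.divDeg 0 = 0 := Finsupp.sum_zero_index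
  rw [divDeg_add, divDeg_Gdiv_s7 X PP _ hrat] at key
  simp only [Finset.sum_const, Finset.card_univ, Fintype.card_fin, nsmul_eq_mul, mul_one] at key
  linarith

theorem stmt7 {Fq F Place : Type*} [Field Fq] [Fintype Fq] [Field F] [Algebra Fq F]
    (X : Data Fq F Place) (P : Place) {t : ℕ} (Q : Fin t → Place) (β : Fin t → ℤ)
    (hPrat : X.IsRational P) (hQrat : ∀ i, X.IsRational (Q i))
    (hQinj : Function.Injective Q) (hPQ : ∀ i, Q i ≠ P)
    {n : ℕ} (PP : Fin n → Place) (hPPrat : ∀ j, X.IsRational (PP j))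
    (hPPinj : Function.Injective PP)
    (hPPP : ∀ j, PP j ≠ P) (hPPQ : ∀ j i, PP j ≠ Q i)
    (a : ℤ) (h₀ : 0 ≤ a + ∑ i, β i) (h₁ : a + ∑ i, β i < n) :
    a ∈ X.HhatS PP P Q β ↔ a ∈ X.HhatB P Q β := by
  set G := Finsupp.single P a + Gdiv Q β with hGdef
  set G' := Finsupp.single P (a - 1) + Gdiv Q β with hG'def
  have hle : X.RR G' ≤ X.RR G := by
    intro f hf
    rw [X.mem_RR] at hf ⊢
    refine hf.imp id fun hf R => (hf R).trans ?_
    have : Finsupp.single P (a - 1) R ≤ Finsupp.single P a R :=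
      Finsupp.single_le_single.2 (by linarith) R
    rw [hGdef, hG'def, Finsupp.add_apply, Finsupp.add_apply]
    linarith
  have hdeg : X.divDeg G < n := by
    have hP : X.divDeg (Finsupp.single P a) = a := by
      unfold Data.IsRational at hPrat
      simp [Data.divDeg, hPrat]
    rw [hGdef, divDeg_add, divDeg_Gdiv_s7 X Q β hQrat, hP]
    exact h₁
  have hG0 : ∀ j, G (PP j) = 0 := by
    intro j
    rw [hGdef, Finsupp.add_apply, Gdiv_apply_of_ne_s7 Q β _ (hPPQ j),
      Finsupp.single_eq_of_ne (hPPP j), add_zero]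
  have hcode : X.code PP G = X.code PP G' ↔ X.RR G = X.RR G' := by
    constructor
    · intro h
      refine le_antisymm (fun z hz => ?_) hle
      have hmem : (fun j => X.ev (PP j) z) ∈ X.code PP G' := h ▸ ⟨z, hz, fun _ => rfl⟩
      obtain ⟨w, hw, hev⟩ := hmem
      rwa [eq_of_ev_eq X G PP hPPrat hPPinj hG0 hdeg z w hz (hle hw) hev]
    · intro h
      unfold Data.code
      rw [h]
  have hdim : X.ell G = X.ell G' ↔ X.RR G = X.RR G' := by
    constructor
    · intro h
      have := X.rr_findim G
      exact (Submodule.eq_of_le_of_finrank_eq hle h.symm).symm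
    · intro h
      unfold Data.ell
      rw [h]
  exact not_congr (hcode.trans hdim.symm)
end
end
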